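/- Let Φ be a quantum channel on n×n complex matrices with Kraus operators {K_j}, and let x, x⊥ ∈ ℂⁿ be orthogonal unit vectors such that Φ(x⊥ x⊥†) Z x = 0 and Φ(x x†) Z x = 0 for every n×n matrix Z in the Hilbert–Schmidt orthogonal complement K_Φ^⊥ of span{K_j}. If additionally Φ(x x†) ≠ Φ(x⊥ x⊥†), then there exists λ ∈ (0,1) such that Φ ∘ Ψ_{λ,x,x⊥}^{-1} is completely positive and rank C(Φ ∘ Ψ_{λ,x,x⊥}^{-1}) < rank C(Φ), i.e. the Kraus rank strictly decreases. -/

import Mathlib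

open Matrix Kronecker
open scoped ComplexOrder

noncomputable section

/-- The linear map `ρ ↦ A ρ Bᴴ`. -/
def sandwich₂ {m n : ℕ} (A B : Matrix (Fin m) (Fin n) ℂ) :
    Matrix (Fin n) (Fin n) ℂ →ₗ[ℂ] Matrix (Fin m) (Fin m) ℂ where
  toFun ρ := A * ρ * Bᴴ
  map_add' X Y := by simp [Matrix.mul_add, Matrix.add_mul]
  map_smul' c X := by simp [Matrix.mul_smul, Matrix.smul_mul]

/-- The linear map `ρ ↦ A ρ Aᴴ`. -/
def sandwich {m n : ℕ} (A : Matrix (Fin m) (Fin n) ℂ) :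
    Matrix (Fin n) (Fin n) ℂ →ₗ[ℂ] Matrix (Fin m) (Fin m) ℂ :=
  sandwich₂ A A

/-- The Choi matrix `C(Φ) = ∑ⱼₖ Eⱼₖ ⊗ Φ(Eⱼₖ)`. -/
def Choi {n m : ℕ} (Φ : Matrix (Fin n) (Fin n) ℂ →ₗ[ℂ] Matrix (Fin m) (Fin m) ℂ) :
    Matrix (Fin n × Fin m) (Fin n × Fin m) ℂ :=
  ∑ j : Fin n, ∑ k : Fin n,
    (Matrix.single j k (1 : ℂ)) ⊗ₖ Φ (Matrix.single j k (1 : ℂ))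

/-- Vectorization: `vec X = ∑ⱼ eⱼ ⊗ X eⱼ`, i.e. `(vec X) (j, i) = X i j`. -/
def vec {m n : ℕ} (X : Matrix (Fin m) (Fin n) ℂ) : Fin n × Fin m → ℂ :=
  fun p => X p.2 p.1

/-- Complete positivity (via the Choi characterization). -/
def IsCP {n : ℕ} (Φ : Matrix (Fin n) (Fin n) ℂ →ₗ[ℂ] Matrix (Fin n) (Fin n) ℂ) : Prop :=
  (Choi Φ).PosSemidef

/-- Trace preservation. -/
def IsTP {n : ℕ} (Φ : Matrix (Fin n) (Fin n) ℂ →ₗ[ℂ] Matrix (Fin n) (Fin n) ℂ) : Prop :=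
  ∀ ρ, (Φ ρ).trace = ρ.trace

/-- Quantum channel: completely positive and trace preserving. -/
def IsChannel {n : ℕ} (Φ : Matrix (Fin n) (Fin n) ℂ →ₗ[ℂ] Matrix (Fin n) (Fin n) ℂ) : Prop :=
  IsCP Φ ∧ IsTP Φ

/-- `K_λ = 1 - (1 - √(1-λ)) x x†`. -/
def Kmat {n : ℕ} (lam : ℝ) (x : Fin n → ℂ) : Matrix (Fin n) (Fin n) ℂ :=
  1 - ((1 - Real.sqrt (1 - lam) : ℝ) : ℂ) • Matrix.vecMulVec x (star x)

/-- `L_λ = √λ y x†`. -/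
def Lmat {n : ℕ} (lam : ℝ) (x y : Fin n → ℂ) : Matrix (Fin n) (Fin n) ℂ :=
  ((Real.sqrt lam : ℝ) : ℂ) • Matrix.vecMulVec y (star x)

/-- The elementary channel `Ψ_{λ,x,y} = K_λ (·) K_λ† + L_λ (·) L_λ†`. -/
def Psi {n : ℕ} (lam : ℝ) (x y : Fin n → ℂ) :
    Matrix (Fin n) (Fin n) ℂ →ₗ[ℂ] Matrix (Fin n) (Fin n) ℂ :=
  sandwich (Kmat lam x) + sandwich (Lmat lam x y)

/-- For `λ ∈ [0,1)` and `⟨x,y⟩ = 0`, the inverse of `Ψ_{λ,x,y}`: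
`Ψ_{λ,x,y}⁻¹ = K_λ⁻¹ (·) K_λ⁻¹ - (1-λ)⁻¹ L_λ (·) L_λ†`. -/
def PsiInv {n : ℕ} (lam : ℝ) (x y : Fin n → ℂ) :
    Matrix (Fin n) (Fin n) ℂ →ₗ[ℂ] Matrix (Fin n) (Fin n) ℂ :=
  sandwich (Kmat lam x)⁻¹ - (((1 - lam)⁻¹ : ℝ) : ℂ) • sandwich (Lmat lam x y)

/-- `Φ` is conjugation by a unitary. -/
def IsUnitaryConj {n : ℕ} (Φ : Matrix (Fin n) (Fin n) ℂ →ₗ[ℂ] Matrix (Fin n) (Fin n) ℂ) : Prop :=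
  ∃ U ∈ Matrix.unitaryGroup (Fin n) ℂ, ∀ ρ, Φ ρ = U * ρ * Uᴴ

/-- A quantum channel is divisible if it factors into two channels neither of which is
a unitary conjugation. -/
def Divisible {n : ℕ} (Φ : Matrix (Fin n) (Fin n) ℂ →ₗ[ℂ] Matrix (Fin n) (Fin n) ℂ) : Prop :=
  ∃ Φ₁ Φ₂ : Matrix (Fin n) (Fin n) ℂ →ₗ[ℂ] Matrix (Fin n) (Fin n) ℂ,
    IsChannel Φ₁ ∧ IsChannel Φ₂ ∧ Φ = Φ₁ ∘ₗ Φ₂ ∧ ¬ IsUnitaryConj Φ₁ ∧ ¬ IsUnitaryConj Φ₂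

/-- `Z = conj(x) conj(x⊥)† ⊗ 1`. -/
def Zmat {n : ℕ} (x xp : Fin n → ℂ) : Matrix (Fin n × Fin n) (Fin n × Fin n) ℂ :=
  (Matrix.vecMulVec (star x) xp) ⊗ₖ (1 : Matrix (Fin n) (Fin n) ℂ)

/-- A rectangular matrix whose kernel contains that of `R` factors through `R`. -/
theorem Matrix.exists_eq_mul_of_mulVec_eq_zero_imp {𝕜 m n o : Type*} [Field 𝕜] [Fintype m]
    [Fintype n] [DecidableEq m] [DecidableEq n] (N : Matrix o n 𝕜) (R : Matrix m n 𝕜)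
    (h : ∀ v, R *ᵥ v = 0 → N *ᵥ v = 0) : ∃ T : Matrix o m 𝕜, N = T * R := by
  have hle : LinearMap.ker R.mulVecLin ≤ LinearMap.ker N.mulVecLin := fun v hv => h v hv
  obtain ⟨g, hg⟩ := LinearMap.exists_leftInverse_of_injective
    ((LinearMap.ker R.mulVecLin).liftQ R.mulVecLin le_rfl)
    (Submodule.ker_liftQ_eq_bot _ _ _ le_rfl)
  refine ⟨LinearMap.toMatrix' ((LinearMap.ker R.mulVecLin).liftQ N.mulVecLin hle ∘ₗ g), ?_⟩
  apply Matrix.ext_of_mulVec_single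
  intro i
  have hgi := LinearMap.congr_fun hg (Submodule.Quotient.mk (Pi.single i 1))
  simp only [LinearMap.comp_apply, Submodule.liftQ_apply, LinearMap.id_apply,
    Matrix.mulVecLin_apply] at hgi
  rw [← Matrix.mulVec_mulVec, LinearMap.toMatrix'_mulVec, LinearMap.comp_apply, hgi,
    Submodule.liftQ_apply, Matrix.mulVecLin_apply]

/-- A matrix whose kernel strictly contains that of `C` has smaller rank than `C`. -/
theorem Matrix.rank_lt_rank_of_ker_lt {m : Type*} [Fintype m] {C D : Matrix m m ℂ}
    (h : ∀ v, C *ᵥ v = 0 → D *ᵥ v = 0) {v : m → ℂ} (hDv : D *ᵥ v = 0) (hCv : C *ᵥ v ≠ 0) :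
    D.rank < C.rank := by
  have hlt : LinearMap.ker C.mulVecLin < LinearMap.ker D.mulVecLin :=
    lt_of_le_of_ne (fun w hw => h w hw) fun heq => hCv (heq.symm.le (show v ∈ _ from hDv))
  have := Submodule.finrank_lt_finrank_of_lt hlt
  have h1 := LinearMap.finrank_range_add_finrank_ker C.mulVecLin
  have h2 := LinearMap.finrank_range_add_finrank_ker D.mulVecLin
  rw [Matrix.rank, Matrix.rank]
  omega

section PosSemidef

open scoped MatrixOrder Matrix.Norms.L2Operator

variable {m : Type*} [Fintype m] [DecidableEq m]

/-- If `ker D ⊆ ker B` for positive semidefinite `D` and `B`, then a small positive multiple of `B`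
can be subtracted from `D` without losing positivity. -/
theorem Matrix.PosSemidef.exists_pos_sub_smul {D B : Matrix m m ℂ} (hD : D.PosSemidef)
    (hB : B.PosSemidef) (h : ∀ v, D *ᵥ v = 0 → B *ᵥ v = 0) :
    ∃ ε : ℝ, 0 < ε ∧ (D - (ε : ℂ) • B).PosSemidef := by
  obtain ⟨R, hR⟩ := CStarAlgebra.nonneg_iff_eq_star_mul_self.mp hD.nonneg
  obtain ⟨N, hN⟩ := CStarAlgebra.nonneg_iff_eq_star_mul_self.mp hB.nonneg
  rw [Matrix.star_eq_conjTranspose] at hR hN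
  obtain ⟨T, hT⟩ := Matrix.exists_eq_mul_of_mulVec_eq_zero_imp N R fun v hv => by
    rw [← Matrix.conjTranspose_mul_self_mulVec_eq_zero, ← hN]
    apply h
    rw [hR, ← Matrix.mulVec_mulVec, hv, Matrix.mulVec_zero]
  set c : ℝ := ‖Tᴴ * T‖ + 1 with hc
  have hcpos : 0 < c := by positivity
  have hle : Tᴴ * T ≤ algebraMap ℝ (Matrix m m ℂ) ‖Tᴴ * T‖ :=
    IsSelfAdjoint.le_algebraMap_norm_self (IsSelfAdjoint.star_mul_self T)
  have hle' : (c : ℂ) • (1 : Matrix m m ℂ) - Tᴴ * T =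
      (algebraMap ℝ (Matrix m m ℂ) ‖Tᴴ * T‖ - Tᴴ * T) + 1 := by
    rw [hc, Algebra.algebraMap_eq_smul_one]
    ext i j
    simp [Matrix.smul_apply, add_mul]
    ring
  have hpsd : ((c : ℂ) • (1 : Matrix m m ℂ) - Tᴴ * T).PosSemidef := by
    rw [hle']
    exact (Matrix.le_iff.mp hle).add Matrix.PosSemidef.one
  refine ⟨c⁻¹, inv_pos.mpr hcpos, ?_⟩
  have hcc : (0 : ℂ) ≤ ((c⁻¹ : ℝ) : ℂ) := by exact_mod_cast (inv_pos.mpr hcpos).le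
  have key := (hpsd.conjTranspose_mul_mul_same R).smul hcc
  convert key using 1
  have hne : (c : ℂ) ≠ 0 := by exact_mod_cast hcpos.ne'
  rw [hR, hN, hT, Matrix.conjTranspose_mul, Matrix.mul_sub, Matrix.sub_mul, smul_sub,
    Matrix.mul_smul, Matrix.smul_mul, smul_smul, Matrix.mul_one]
  push_cast
  rw [inv_mul_cancel₀ hne, one_smul]
  simp only [Matrix.mul_assoc]

/-- Subtracting the largest admissible multiple of `B` from `C` drops the rank. -/
theorem Matrix.PosSemidef.exists_sub_smul_rank_lt {C B : Matrix m m ℂ} (hC : C.PosSemidef)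
    (hB : B.PosSemidef) (hB0 : B ≠ 0) (h : ∀ v, C *ᵥ v = 0 → B *ᵥ v = 0) :
    ∃ t : ℝ, 0 < t ∧ (C - (t : ℂ) • B).PosSemidef ∧ (C - (t : ℂ) • B).rank < C.rank := by
  obtain ⟨w, hw⟩ : ∃ w, B *ᵥ w ≠ 0 := by
    by_contra! hall
    exact hB0 (Matrix.ext_of_mulVec_single fun i => by rw [hall, Matrix.zero_mulVec])
  have hwpos : 0 < star w ⬝ᵥ B *ᵥ w :=
    lt_of_le_of_ne (hB.dotProduct_mulVec_nonneg w)
      fun h0 => hw ((hB.dotProduct_mulVec_zero_iff w).mp h0.symm)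
  set S : Set ℝ := {t | 0 ≤ t ∧ (C - (t : ℂ) • B).PosSemidef} with hS
  have hclosed : IsClosed S := by
    refine isClosed_Ici.inter ?_
    have hpre : {t : ℝ | (C - (t : ℂ) • B).PosSemidef} =
        (fun t : ℝ => C - (t : ℂ) • B) ⁻¹' {A | 0 ≤ A} := by
      ext t
      simp [Matrix.nonneg_iff_posSemidef]
    exact (hpre ▸ CStarAlgebra.isClosed_nonneg.preimage (by fun_prop) : IsClosed _)
  have hbdd : S ⊆ Set.Icc 0 ((star w ⬝ᵥ C *ᵥ w).re / (star w ⬝ᵥ B *ᵥ w).re) := by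
    rintro t ⟨ht0, ht⟩
    refine ⟨ht0, ?_⟩
    rw [le_div_iff₀ (Complex.pos_iff.mp hwpos).1]
    have := (Complex.nonneg_iff.mp (ht.dotProduct_mulVec_nonneg w)).1
    simp [Matrix.sub_mulVec, Matrix.smul_mulVec, dotProduct_sub, dotProduct_smul] at this
    linarith
  have hcomp : IsCompact S := isCompact_Icc.of_isClosed_subset hclosed hbdd
  obtain ⟨t, ⟨ht0, ht⟩, hmax⟩ := hcomp.exists_isGreatest ⟨0, le_rfl, by simpa using hC⟩
  obtain ⟨ε, hε, hεC⟩ := hC.exists_pos_sub_smul hB h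
  refine ⟨t, hε.trans_le (hmax ⟨hε.le, hεC⟩), ht, ?_⟩
  obtain ⟨v, hv, hBv⟩ : ∃ v, (C - (t : ℂ) • B) *ᵥ v = 0 ∧ B *ᵥ v ≠ 0 := by
    by_contra! hall
    obtain ⟨δ, hδ, hδC⟩ := ht.exists_pos_sub_smul hB hall
    have : t + δ ≤ t := hmax ⟨by positivity, by
      convert hδC using 1
      push_cast
      rw [add_smul, sub_sub]⟩
    linarith
  refine Matrix.rank_lt_rank_of_ker_lt (v := v) (fun u hu => ?_) hv fun hCv => ?_
  · rw [Matrix.sub_mulVec, Matrix.smul_mulVec, hu, h u hu, smul_zero, sub_zero]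
  · exact hBv (h v hCv)

end PosSemidef

section Choi

variable {n : ℕ} (Φ : Matrix (Fin n) (Fin n) ℂ →ₗ[ℂ] Matrix (Fin n) (Fin n) ℂ)

theorem Choi_apply (p q : Fin n × Fin n) :
    Choi Φ p q = Φ (Matrix.single p.1 q.1 1) p.2 q.2 := by
  simp only [Choi, Matrix.sum_apply, Matrix.kroneckerMap_apply, Matrix.single_apply, ite_and,
    ite_mul, one_mul, zero_mul]
  simp

/-- Entries of `Φ A` in terms of the entries of the Choi matrix. -/
theorem map_apply_eq_sum_Choi (A : Matrix (Fin n) (Fin n) ℂ) (a b : Fin n) :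
    Φ A a b = ∑ p, ∑ q, A p q * Choi Φ (p, a) (q, b) := by
  conv_lhs => rw [Matrix.matrix_eq_sum_single A]
  simp only [map_sum, Matrix.sum_apply, Choi_apply]
  refine Finset.sum_congr rfl fun p _ => Finset.sum_congr rfl fun q _ => ?_
  rw [← mul_one (A p q), ← smul_eq_mul, ← Matrix.smul_single, map_smul, Matrix.smul_apply]
  simp

/-- Precomposition with `ρ ↦ A ρ Aᴴ` conjugates the Choi matrix by `Aᵀ ⊗ 1`. -/
theorem Choi_comp_sandwich (A : Matrix (Fin n) (Fin n) ℂ) :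
    Choi (Φ ∘ₗ sandwich A) =
      (Aᵀ ⊗ₖ (1 : Matrix (Fin n) (Fin n) ℂ)) * Choi Φ * (Aᵀ ⊗ₖ 1)ᴴ := by
  ext ⟨j, a⟩ ⟨k, b⟩
  rw [Choi_apply, LinearMap.comp_apply, map_apply_eq_sum_Choi]
  simp only [sandwich, sandwich₂, LinearMap.coe_mk, AddHom.coe_mk, Matrix.mul_apply,
    Fintype.sum_prod_type, Matrix.kroneckerMap_apply, Matrix.conjTranspose_apply,
    Matrix.transpose_apply, Matrix.one_apply, Matrix.single_apply, apply_ite star,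
    star_zero, mul_ite, mul_one, mul_zero, ite_mul, zero_mul, ite_and,
    Finset.sum_ite_eq, Finset.mem_univ, if_true, Finset.sum_mul]
  rw [Finset.sum_comm]
  refine Finset.sum_congr rfl fun q _ => Finset.sum_congr rfl fun p _ => ?_
  simp
  ring

/-- The isometry `v ↦ x̄ ⊗ v`. -/
def conjTensor (x : Fin n → ℂ) : Matrix (Fin n × Fin n) (Fin n) ℂ :=
  Matrix.of fun p b => if p.2 = b then star (x p.1) else 0

theorem conjTensor_compress_Choi (x : Fin n → ℂ) :
    (conjTensor x)ᴴ * Choi Φ * conjTensor x = Φ (Matrix.vecMulVec x (star x)) := by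
  ext a b
  rw [map_apply_eq_sum_Choi]
  simp only [conjTensor, Matrix.mul_apply, Fintype.sum_prod_type, Matrix.conjTranspose_apply,
    Matrix.of_apply, apply_ite star, star_star, star_zero, ite_mul, mul_ite, mul_zero, zero_mul,
    Finset.sum_ite_eq', Finset.mem_univ, if_true, Matrix.vecMulVec_apply, Pi.star_apply,
    Finset.sum_mul]
  rw [Finset.sum_comm]
  refine Finset.sum_congr rfl fun q _ => Finset.sum_congr rfl fun p _ => ?_
  ring

/-- The rows are the conjugated vectorizations of the Kraus operators. -/
def krausRows {r : ℕ} (K : Fin r → Matrix (Fin n) (Fin n) ℂ) :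
    Matrix (Fin r) (Fin n × Fin n) ℂ :=
  Matrix.of fun l => star (_root_.vec (K l))

variable {Φ} in
theorem Choi_eq_conjTranspose_mul_self {r : ℕ} {K : Fin r → Matrix (Fin n) (Fin n) ℂ}
    (hKraus : ∀ ρ, Φ ρ = ∑ j, K j * ρ * (K j)ᴴ) :
    Choi Φ = (krausRows K)ᴴ * krausRows K := by
  ext ⟨j, a⟩ ⟨k, b⟩
  rw [Choi_apply, hKraus]
  simp [krausRows, _root_.vec, Matrix.mul_apply, Matrix.sum_apply, Matrix.single_apply, ite_and]

variable {Φ} in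
/-- The kernel of the Choi matrix consists of vectorized elements of `K_Φ^⊥`. -/
theorem trace_eq_zero_of_Choi_mulVec_eq_zero {r : ℕ} {K : Fin r → Matrix (Fin n) (Fin n) ℂ}
    (hKraus : ∀ ρ, Φ ρ = ∑ j, K j * ρ * (K j)ᴴ) {v : Fin n × Fin n → ℂ}
    (hv : Choi Φ *ᵥ v = 0) (j : Fin r) :
    ((K j)ᴴ * Matrix.of fun a k => v (k, a)).trace = 0 := by
  rw [Choi_eq_conjTranspose_mul_self hKraus, Matrix.conjTranspose_mul_self_mulVec_eq_zero] at hv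
  simpa [krausRows, _root_.vec, Matrix.mulVec, dotProduct, Fintype.sum_prod_type, Matrix.trace,
    Matrix.mul_apply] using congrFun hv j

theorem sandwich_vecMulVec (y x : Fin n → ℂ) (ρ : Matrix (Fin n) (Fin n) ℂ) :
    sandwich (Matrix.vecMulVec y (star x)) ρ =
      (star x ⬝ᵥ ρ *ᵥ x) • Matrix.vecMulVec y (star y) := by
  simp only [sandwich, sandwich₂, LinearMap.coe_mk, AddHom.coe_mk]
  rw [Matrix.conjTranspose_vecMulVec, star_star, Matrix.mul_assoc, Matrix.mul_vecMulVec,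
    Matrix.vecMulVec_mul_vecMulVec]
  ext
  simp [Matrix.vecMulVec_apply, mul_left_comm]

theorem Choi_comp_sandwich_vecMulVec_mulVec (y x : Fin n → ℂ) (v : Fin n × Fin n → ℂ)
    (j a : Fin n) :
    (Choi (Φ ∘ₗ sandwich (Matrix.vecMulVec y (star x))) *ᵥ v) (j, a) =
      star (x j) * ((Φ (Matrix.vecMulVec y (star y)) *
        Matrix.of fun a k => v (k, a)) *ᵥ x) a := by
  simp only [Matrix.mulVec, dotProduct, Choi_apply, LinearMap.comp_apply, sandwich_vecMulVec,
    map_smul, Matrix.smul_apply, Fintype.sum_prod_type, Matrix.mul_apply, Matrix.of_apply,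
    Finset.mul_sum, Finset.sum_mul]
  refine Finset.sum_congr rfl fun k _ => Finset.sum_congr rfl fun b _ => ?_
  simp [Matrix.single_apply, ite_and]
  ring

theorem Kmat_mul_vecMulVec (lam : ℝ) {x : Fin n → ℂ} (hx : star x ⬝ᵥ x = 1) (y : Fin n → ℂ) :
    Kmat lam x * Matrix.vecMulVec x y =
      ((Real.sqrt (1 - lam) : ℝ) : ℂ) • Matrix.vecMulVec x y := by
  rw [Kmat, Matrix.sub_mul, Matrix.one_mul, Matrix.smul_mul, Matrix.vecMulVec_mul_vecMulVec, hx]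
  ext
  simp
  ring

theorem isUnit_det_Kmat {lam : ℝ} (h1 : lam < 1) {x : Fin n → ℂ} (hx : star x ⬝ᵥ x = 1) :
    IsUnit (Kmat lam x).det := by
  set s : ℂ := ((Real.sqrt (1 - lam) : ℝ) : ℂ) with hs
  have hs0 : s ≠ 0 := by
    rw [hs]
    exact_mod_cast (Real.sqrt_pos.mpr (sub_pos.mpr h1)).ne'
  refine Matrix.isUnit_det_of_right_inverse (B := 1 + (s⁻¹ - 1) • Matrix.vecMulVec x (star x)) ?_
  rw [Matrix.mul_add, Matrix.mul_one, Matrix.mul_smul, Kmat_mul_vecMulVec lam hx, Kmat]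
  ext
  simp [← hs]
  field_simp
  ring

theorem vecMulVec_mul_Kmat (lam : ℝ) {x : Fin n → ℂ} (hx : star x ⬝ᵥ x = 1) (y : Fin n → ℂ) :
    Matrix.vecMulVec y (star x) * Kmat lam x =
      ((Real.sqrt (1 - lam) : ℝ) : ℂ) • Matrix.vecMulVec y (star x) := by
  rw [Kmat, Matrix.mul_sub, Matrix.mul_one, Matrix.mul_smul, Matrix.vecMulVec_mul_vecMulVec, hx]
  ext
  simp
  ring

/-- `Ψ⁻¹` as a perturbation of the identity composed with conjugation by `K⁻¹`. -/
theorem PsiInv_eq_comp {lam : ℝ} (h0 : 0 ≤ lam) (h1 : lam < 1) {x : Fin n → ℂ}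
    (hx : star x ⬝ᵥ x = 1) (y : Fin n → ℂ) :
    PsiInv lam x y = (LinearMap.id - (lam : ℂ) • sandwich (Matrix.vecMulVec y (star x))) ∘ₗ
      sandwich (Kmat lam x)⁻¹ := by
  set V := Matrix.vecMulVec y (star x) with hV
  set s : ℝ := Real.sqrt (1 - lam) with hs
  have hss : s * s = 1 - lam := Real.mul_self_sqrt (by linarith)
  have hll : Real.sqrt lam * Real.sqrt lam = lam := Real.mul_self_sqrt h0
  have hVK : V = (s : ℂ) • (V * (Kmat lam x)⁻¹) := by
    rw [← Matrix.smul_mul, hV, hs, ← vecMulVec_mul_Kmat lam hx, Matrix.mul_assoc,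
      Matrix.mul_nonsing_inv _ (isUnit_det_Kmat h1 hx), Matrix.mul_one]
  have hL : Lmat lam x y = ((Real.sqrt lam * s : ℝ) : ℂ) • (V * (Kmat lam x)⁻¹) := by
    rw [Lmat, ← hV, hVK, smul_smul, ← hVK, Complex.ofReal_mul]
  have hcoef : (((1 - lam)⁻¹ : ℝ) : ℂ) *
      (((Real.sqrt lam * s : ℝ) : ℂ) * ((Real.sqrt lam * s : ℝ) : ℂ)) = (lam : ℂ) := by
    rw [← Complex.ofReal_mul, ← Complex.ofReal_mul]
    congr 1
    rw [show Real.sqrt lam * s * (Real.sqrt lam * s) =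
      Real.sqrt lam * Real.sqrt lam * (s * s) by ring, hss, hll]
    field_simp [(sub_pos.mpr h1).ne']
  ext1 ρ
  simp only [PsiInv, sandwich, sandwich₂, hL, LinearMap.sub_apply, LinearMap.smul_apply,
    LinearMap.comp_apply, LinearMap.id_apply, LinearMap.coe_mk, AddHom.coe_mk,
    Matrix.conjTranspose_smul, Matrix.conjTranspose_mul, Matrix.smul_mul, Matrix.mul_smul,
    smul_smul, Complex.star_def, Complex.conj_ofReal, hcoef, Matrix.mul_assoc]

theorem Choi_sub_smul (Θ : Matrix (Fin n) (Fin n) ℂ →ₗ[ℂ] Matrix (Fin n) (Fin n) ℂ) (c : ℂ) :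
    Choi (Φ - c • Θ) = Choi Φ - c • Choi Θ := by
  ext p q
  simp [Choi_apply]

/-- The Choi matrix of `Φ ∘ Ψ⁻¹` is congruent to `C(Φ) - λ C(Φ ∘ (y x†) · (y x†)†)`. -/
theorem Choi_comp_PsiInv {lam : ℝ} (h0 : 0 ≤ lam) (h1 : lam < 1) {x : Fin n → ℂ}
    (hx : star x ⬝ᵥ x = 1) (y : Fin n → ℂ) :
    Choi (Φ ∘ₗ PsiInv lam x y) =
      ((Kmat lam x)⁻¹ᵀ ⊗ₖ (1 : Matrix (Fin n) (Fin n) ℂ)) *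
        (Choi Φ - (lam : ℂ) • Choi (Φ ∘ₗ sandwich (Matrix.vecMulVec y (star x)))) *
        ((Kmat lam x)⁻¹ᵀ ⊗ₖ (1 : Matrix (Fin n) (Fin n) ℂ))ᴴ := by
  rw [PsiInv_eq_comp h0 h1 hx, ← LinearMap.comp_assoc, LinearMap.comp_sub, LinearMap.comp_id,
    LinearMap.comp_smul, Choi_comp_sandwich, Choi_sub_smul]

end Choi

/-- under the sufficient criterion, if moreover `Φ(xx†) ≠ Φ(x⊥x⊥†)`, the
Kraus rank can be strictly decreased. -/
theorem sufficient_criterion_rank_drop (n r : ℕ) (K : Fin r → Matrix (Fin n) (Fin n) ℂ)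
    (Φ : Matrix (Fin n) (Fin n) ℂ →ₗ[ℂ] Matrix (Fin n) (Fin n) ℂ)
    (hKraus : ∀ ρ, Φ ρ = ∑ j, K j * ρ * (K j)ᴴ) (hΦ : IsChannel Φ)
    (x xp : Fin n → ℂ)
    (hx : star x ⬝ᵥ x = 1) (hxp : star xp ⬝ᵥ xp = 1) (horth : star x ⬝ᵥ xp = 0)
    (hcond : ∀ Z : Matrix (Fin n) (Fin n) ℂ, (∀ j, ((K j)ᴴ * Z).trace = 0) →
      (Φ (Matrix.vecMulVec xp (star xp)) * Z) *ᵥ x = 0 ∧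
      (Φ (Matrix.vecMulVec x (star x)) * Z) *ᵥ x = 0)
    (hneq : Φ (Matrix.vecMulVec x (star x)) ≠ Φ (Matrix.vecMulVec xp (star xp))) :
    ∃ lam ∈ Set.Ioo (0 : ℝ) 1, IsCP (Φ ∘ₗ PsiInv lam x xp) ∧
      (Choi (Φ ∘ₗ PsiInv lam x xp)).rank < (Choi Φ).rank := by
  obtain ⟨hCP, hTP⟩ := hΦ
  set Θ := Φ ∘ₗ sandwich (Matrix.vecMulVec xp (star x)) with hΘ
  have hΘx : Θ (Matrix.vecMulVec x (star x)) = Φ (Matrix.vecMulVec xp (star xp)) := by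
    rw [hΘ, LinearMap.comp_apply, sandwich_vecMulVec, Matrix.vecMulVec_mulVec, hx]
    simp [hx]
  have hΘCP : (Choi Θ).PosSemidef := by
    rw [hΘ, Choi_comp_sandwich]
    exact hCP.mul_mul_conjTranspose_same _
  have htrace : ∀ y : Fin n → ℂ, star y ⬝ᵥ y = 1 →
      (Φ (Matrix.vecMulVec y (star y))).trace = 1 := fun y hy => by
    rw [hTP, Matrix.trace_vecMulVec, dotProduct_comm, hy]
  have hΘ0 : Choi Θ ≠ 0 := fun h => by
    have h1 := htrace xp hxp
    rw [← hΘx, ← conjTensor_compress_Choi, h] at h1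
    simp at h1
  obtain ⟨t, ht0, ht, hrank⟩ := hCP.exists_sub_smul_rank_lt hΘCP hΘ0 fun v hv => by
    ext ⟨j, a⟩
    rw [hΘ, Choi_comp_sandwich_vecMulVec_mulVec,
      (hcond _ fun l => trace_eq_zero_of_Choi_mulVec_eq_zero hKraus hv l).1]
    simp
  have ht1 : t < 1 := by
    by_contra! hle
    have hpsd : (Choi Φ - Choi Θ).PosSemidef := by
      have hc : (0 : ℂ) ≤ ((t - 1 : ℝ) : ℂ) := by exact_mod_cast sub_nonneg.mpr hle
      convert ht.add (hΘCP.smul hc) using 1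
      push_cast
      rw [sub_smul, one_smul]
      abel
    have hcompress := hpsd.conjTranspose_mul_mul_same (conjTensor x)
    rw [Matrix.mul_sub, Matrix.sub_mul, conjTensor_compress_Choi, conjTensor_compress_Choi, hΘx]
      at hcompress
    refine hneq (sub_eq_zero.mp (hcompress.trace_eq_zero_iff.mp ?_))
    rw [Matrix.trace_sub, htrace x hx, htrace xp hxp, sub_self]
  refine ⟨t, ⟨ht0, ht1⟩, ?_, ?_⟩
  · rw [IsCP, Choi_comp_PsiInv Φ ht0.le ht1 hx]
    exact ht.mul_mul_conjTranspose_same _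
  · rw [Choi_comp_PsiInv Φ ht0.le ht1 hx]
    exact ((Matrix.rank_mul_le_left _ _).trans (Matrix.rank_mul_le_right _ _)).trans_lt hrank

end
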